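/- Let P be a finite-volume right-angled convex hyperbolic n-polyhedron (n ≥ 2) and let 1 ≤ k ≤ n − 1. Then every finite vertex of P is contained in exactly C(n, k) k-faces of P, and every ideal vertex of P is contained in exactly C(n−1, k−1) · 2^{n−k} k-faces of P (the link of a finite vertex is an (n−1)-simplex and the link of an ideal vertex is an (n−1)-cube). In particular, every ideal vertex is contained in exactly 2(n−1) facets. -/

import Mathlib

open scoped BigOperators

noncomputable section

/-- The Minkowski bilinear form `⟨x,y⟩ = -x₀y₀ + x₁y₁ + ⋯ + xₙyₙ` on `ℝ^{n+1}`. -/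
def mink {n : ℕ} (x y : Fin (n + 1) → ℝ) : ℝ :=
  -(x 0 * y 0) + ∑ i : Fin n, x i.succ * y i.succ

/-- The hyperboloid model of the hyperbolic space `ℍⁿ`. -/
def Hyperboloid (n : ℕ) : Set (Fin (n + 1) → ℝ) :=
  {x | mink x x = -1 ∧ 0 < x 0}

/-- The Klein projection `x ↦ (x₁/x₀, …, xₙ/x₀)` of the hyperboloid onto the unit ball. -/
def kleinMap {n : ℕ} (x : Fin (n + 1) → ℝ) : EuclideanSpace ℝ (Fin n) :=
  WithLp.toLp 2 fun i => x i.succ / x 0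

/-- Dimension of a subset of a real vector space: the rank of its vector span. -/
def sdim {n : ℕ} (s : Set (EuclideanSpace ℝ (Fin n))) : ℕ :=
  Module.finrank ℝ (vectorSpan ℝ s)

/-- A convex hyperbolic `n`-polyhedron: a finite intersection of hyperbolic half-spaces
`H_{eᵢ}⁻ = {x : ⟨eᵢ,x⟩ ≤ 0}` (with `⟨eᵢ,eᵢ⟩ = 1`) having nonempty interior
(equivalently, its Klein-model image has nonempty interior in `ℝⁿ`). -/
structure HypPolyhedron (n : ℕ) where
  m : ℕ
  e : Fin m → (Fin (n + 1) → ℝ)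
  unit : ∀ i, mink (e i) (e i) = 1
  nonempty_int :
    (interior (kleinMap '' {x ∈ Hyperboloid n | ∀ i, mink (e i) x ≤ 0})).Nonempty

namespace HypPolyhedron

variable {n : ℕ} (P : HypPolyhedron n)

/-- The set of points of the polyhedron in the hyperboloid model. -/
def carrier : Set (Fin (n + 1) → ℝ) :=
  {x ∈ Hyperboloid n | ∀ i, mink (P.e i) x ≤ 0}

/-- `P̄`: the closure of the Klein-model image of the polyhedron in the closed unit ball. -/
def cl : Set (EuclideanSpace ℝ (Fin n)) :=
  closure (kleinMap '' P.carrier)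

/-- The `k`-faces of `P`: the `k`-dimensional (nonempty) exposed faces of `P̄`. -/
def faces (k : ℕ) : Set (Set (EuclideanSpace ℝ (Fin n))) :=
  {F | IsExposed ℝ P.cl F ∧ F.Nonempty ∧ sdim F = k}

/-- `a_k(P)`: the number of `k`-faces of `P`. -/
def a (k : ℕ) : ℕ := (P.faces k).ncard

/-- Vertices of `P`: the points of `0`-dimensional exposed faces of `P̄`. -/
def verts : Set (EuclideanSpace ℝ (Fin n)) :=
  {v | IsExposed ℝ P.cl {v}}

/-- Ideal vertices: vertices lying on the unit sphere. -/
def idealVerts : Set (EuclideanSpace ℝ (Fin n)) :=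
  {v ∈ P.verts | ‖v‖ = 1}

/-- Finite vertices: vertices lying in the open unit ball. -/
def finiteVerts : Set (EuclideanSpace ℝ (Fin n)) :=
  {v ∈ P.verts | ‖v‖ < 1}

/-- `v_∞(P)`: the number of ideal vertices of `P`. -/
def vInf : ℕ := P.idealVerts.ncard

/-- The bounding hyperplane `H_e` contains the face `F`. -/
def faceInHyperplane (e : Fin (n + 1) → ℝ) (F : Set (EuclideanSpace ℝ (Fin n))) : Prop :=
  ∀ x ∈ P.carrier, kleinMap x ∈ F → mink e x = 0

/-- `P` is right-angled: whenever two distinct bounding hyperplanes both contain an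
`(n-2)`-dimensional face of `P`, the corresponding unit normals are orthogonal,
i.e. the dihedral angle is `π/2`. -/
def IsRightAngled : Prop :=
  ∀ i j : Fin P.m, i ≠ j →
    (∃ F ∈ P.faces (n - 2), P.faceInHyperplane (P.e i) F ∧ P.faceInHyperplane (P.e j) F) →
    mink (P.e i) (P.e j) = 0

/-- `P` has finite volume: `P̄` is the convex hull of its (finitely many) vertices. -/
def FiniteVolume : Prop :=
  P.verts.Finite ∧ P.cl = convexHull ℝ P.verts

/-- `P` is compact: finite volume and all vertices are finite. -/
def IsCompactPoly : Prop :=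
  P.FiniteVolume ∧ ∀ v ∈ P.verts, ‖v‖ < 1

/-- `P` is ideal: finite volume and all vertices are ideal. -/
def IsIdeal : Prop :=
  P.FiniteVolume ∧ ∀ v ∈ P.verts, ‖v‖ = 1

end HypPolyhedron

/-- `ν(P) = a_{n-1}(P) + v_∞(P)` ranging over the family `𝒫ⁿ` of finite-volume non-compact
right-angled convex hyperbolic `n`-polyhedra. -/
def nuSet (n : ℕ) : Set ℕ :=
  {m | ∃ P : HypPolyhedron n,
        P.FiniteVolume ∧ P.IsRightAngled ∧ ¬ P.IsCompactPoly ∧ P.a (n - 1) + P.vInf = m}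

/-- `νₙ = sInf {ν(P) : P ∈ 𝒫ⁿ}` (with `sInf ∅ = 0`). -/
def nu (n : ℕ) : ℕ := sInf (nuSet n)

/-!
Keep only the irredundant walls of `P`. The walls bounding the facet on a given wall are orthogonal
to that wall, so orthogonal projection onto it maps `P` into itself; projecting a point of another
wall that lies strictly inside all the others shows `⟨eᵢ, eⱼ⟩ ≤ 0` for `i ≠ j`. If moreover
`-1 < ⟨eᵢ, eⱼ⟩`, then projecting an interior point onto the intersection of the two walls gives a
point of `P` lying on no other wall, so the two walls meet in an `(n - 2)`-face and `⟨eᵢ, eⱼ⟩ = 0`.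
In the same way every set of `n - k` pairwise orthogonal walls cuts out a `k`-face, and for `1 ≤ k`
every `k`-face arises from exactly one such set. It remains to count the orthogonal sets of walls
through a vertex `v`.

At a finite vertex the walls through `v` are pairwise orthogonal and there are `n` of them. At an
ideal vertex their normals, modulo the null vector of `v`, are unit vectors in a Euclidean space of
dimension `n - 1`, any two of which are orthogonal or opposite. They are the normals of a bounded
box: otherwise some horospherical direction stays inside all walls through `v`, and the ideal
vertices of `P` accumulate at `v`.
-/

section Convexity

open Set Filter Topology

variable {ι V : Type*} [AddCommGroup V] [Module ℝ V]

theorem exists_mem_openSegment_eq_zero {g : V →ₗ[ℝ] ℝ} {x y : V} (hx : g x < 0) (hy : 0 < g y) :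
    ∃ w ∈ openSegment ℝ x y, g w = 0 := by
  have himage : g '' openSegment ℝ x y = Ioo (g x) (g y) :=
    (image_openSegment ℝ g.toAffineMap x y).trans (openSegment_eq_Ioo (hx.trans hy))
  exact himage.ge ⟨hx, hy⟩

theorem neg_of_mem_openSegment {g : V →ₗ[ℝ] ℝ} {x y w : V} (hx : g x < 0) (hy : g y ≤ 0)
    (hw : w ∈ openSegment ℝ x y) : g w < 0 := by
  obtain ⟨a, b, ha, hb, -, rfl⟩ := hw
  rw [map_add, map_smul, map_smul, smul_eq_mul, smul_eq_mul]
  exact add_neg_of_neg_of_nonpos (mul_neg_of_pos_of_neg ha hx)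
    (mul_nonpos_of_nonneg_of_nonpos hb.le hy)

theorem exists_irredundant_subset (g : ι → V →ₗ[ℝ] ℝ) {K : Set V} (hK : Convex ℝ K)
    (s : Finset ι) {x₀ : V} (hx₀ : x₀ ∈ K) (hs : ∀ i ∈ s, g i x₀ < 0) :
    ∃ t ⊆ s, (∀ x ∈ K, (∀ i ∈ t, g i x ≤ 0) → ∀ i ∈ s, g i x ≤ 0) ∧
      ∀ i ∈ t, ∃ w ∈ K, g i w = 0 ∧ ∀ j ∈ t, j ≠ i → g j w < 0 := by
  classical
  induction s using Finset.strongInduction with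
  | H s ih =>
    by_cases hredundant : ∃ i ∈ s, ∀ x ∈ K, (∀ j ∈ s.erase i, g j x ≤ 0) → g i x ≤ 0
    · obtain ⟨i, hi, hi_le⟩ := hredundant
      obtain ⟨t, hts, ht, hwitness⟩ := ih _ (Finset.erase_ssubset hi)
        fun j hj => hs j (Finset.mem_of_mem_erase hj)
      refine ⟨t, hts.trans (Finset.erase_subset _ _), fun x hx hxt j hj => ?_, hwitness⟩
      obtain rfl | hji := eq_or_ne j i
      · exact hi_le x hx (ht x hx hxt)
      · exact ht x hx hxt j (Finset.mem_erase.2 ⟨hji, hj⟩)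
    · push Not at hredundant
      refine ⟨s, subset_rfl, fun x _ hx => hx, fun i hi => ?_⟩
      obtain ⟨y, hy, hy_le, hy_pos⟩ := hredundant i hi
      obtain ⟨w, hw, hw_zero⟩ := exists_mem_openSegment_eq_zero (hs i hi) hy_pos
      exact ⟨w, hK.openSegment_subset hx₀ hy hw, hw_zero, fun j hj hji =>
        neg_of_mem_openSegment (hs j hj) (hy_le j (Finset.mem_erase.2 ⟨hji, hj⟩)) hw⟩

theorem exists_mem_forall_neg_or_forall_eq_zero {F : Set V} (hF : F.Nonempty) {g : ι → V → ℝ}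
    {s : Finset ι} (hg : ∀ i ∈ s, ConvexOn ℝ F (g i)) (hle : ∀ i ∈ s, ∀ y ∈ F, g i y ≤ 0) :
    ∃ f ∈ F, ∀ i ∈ s, g i f < 0 ∨ ∀ y ∈ F, g i y = 0 := by
  classical
  induction s using Finset.induction_on with
  | empty => exact ⟨hF.some, hF.some_mem, by simp⟩
  | insert j s _ ih =>
    rw [Finset.forall_mem_insert] at hg hle
    obtain ⟨f, hf, hfs⟩ := ih hg.2 hle.2
    by_cases hj : ∀ y ∈ F, g j y = 0
    · exact ⟨f, hf, Finset.forall_mem_insert _ _ _ |>.2 ⟨Or.inr hj, hfs⟩⟩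
    push Not at hj
    obtain ⟨y, hy, hjy⟩ := hj
    have hmid : ∀ i, ConvexOn ℝ F (g i) →
        g i ((1 / 2 : ℝ) • f + (1 / 2 : ℝ) • y) ≤ 1 / 2 * g i f + 1 / 2 * g i y :=
      fun i hi => hi.2 hf hy (by norm_num) (by norm_num) (by norm_num)
    refine ⟨(1 / 2 : ℝ) • f + (1 / 2 : ℝ) • y,
      hg.1.1 hf hy (by norm_num) (by norm_num) (by norm_num),
      Finset.forall_mem_insert _ _ _ |>.2 ⟨Or.inl ?_,
        fun i hi => (hfs i hi).imp_left fun hfi => ?_⟩⟩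
    · linarith [hmid j hg.1, hle.1 f hf, (hle.1 y hy).lt_of_ne hjy]
    · linarith [hmid i (hg.2 i hi), hle.2 i hi y hy]

theorem vectorSpan_eq_of_eventually_mem [TopologicalSpace V] [ContinuousAdd V]
    [ContinuousSMul ℝ V] {F : Set V} {W : Submodule ℝ V} {y : V} (hF : ∀ x ∈ F, x - y ∈ W)
    (hy : ∀ᶠ x in 𝓝 y, x - y ∈ W → x ∈ F) : vectorSpan ℝ F = W := by
  have hyF : y ∈ F := hy.self_of_nhds (by simp)
  refine le_antisymm (Submodule.span_le.2 ?_) fun d hd => ?_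
  · rintro _ ⟨a, ha, b, hb, rfl⟩
    simpa using W.sub_mem (hF a ha) (hF b hb)
  · have hline : Tendsto (fun t : ℝ => y + t • d) (𝓝[>] 0) (𝓝 y) := by
      have : Continuous fun t : ℝ => y + t • d := by fun_prop
      simpa using (this.tendsto 0).mono_left nhdsWithin_le_nhds
    obtain ⟨t, ht, ht0 : 0 < t⟩ := ((hline.eventually hy).and self_mem_nhdsWithin).exists
    have hmem := vsub_mem_vectorSpan ℝ (ht (by simpa using W.smul_mem t hd)) hyF
    rw [vsub_eq_sub, add_sub_cancel_left] at hmem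
    exact (Submodule.smul_mem_iff _ ht0.ne').1 hmem

end Convexity

section InnerProduct

variable {V : Type*} [NormedAddCommGroup V] [InnerProductSpace ℝ V]

theorem isExposed_singleton_of_norm_eq_one {K : Set V} (hK : ∀ x ∈ K, ‖x‖ ≤ 1) {v : V}
    (hvK : v ∈ K) (hv : ‖v‖ = 1) : IsExposed ℝ K {v} := by
  refine fun _ => ⟨innerSL ℝ v, Set.ext fun x => ⟨?_, fun ⟨hx, hmax⟩ => ?_⟩⟩
  · rintro rfl
    refine ⟨hvK, fun y hy => ?_⟩
    calc inner ℝ x y ≤ ‖x‖ * ‖y‖ := real_inner_le_norm x y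
      _ ≤ inner ℝ x x := by simpa [hv] using hK y hy
  · have h1 : 1 ≤ inner ℝ v x := by simpa [hv] using hmax v hvK
    have h2 := norm_sub_sq_real v x
    have h3 : ‖v - x‖ ^ 2 ≤ 0 := by nlinarith [hK x hx, norm_nonneg x]
    rw [Set.mem_singleton_iff, eq_comm, ← sub_eq_zero, ← norm_eq_zero]
    exact pow_eq_zero_iff two_ne_zero |>.1 (le_antisymm h3 (sq_nonneg _))

theorem finrank_orthogonal_span_image_add_card [FiniteDimensional ℝ V] {ι : Type*} {e : ι → V}
    {S : Finset ι} (he : LinearIndepOn ℝ e (S : Set ι)) :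
    Module.finrank ℝ (Submodule.span ℝ (e '' S))ᗮ + S.card = Module.finrank ℝ V := by
  have hspan : Module.finrank ℝ (Submodule.span ℝ (e '' S)) = S.card := by
    rw [Set.image_eq_range, finrank_span_eq_card he]
    simp
  rw [← hspan, add_comm, Submodule.finrank_add_finrank_orthogonal]

theorem mem_orthogonal_span_image_iff {ι : Type*} {e : ι → V} {S : Set ι} {d : V} :
    d ∈ (Submodule.span ℝ (e '' S))ᗮ ↔ ∀ i ∈ S, inner ℝ (e i) d = 0 := by
  rw [← Submodule.span_singleton_le_iff_mem, ← Submodule.isOrtho_iff_le, Submodule.isOrtho_comm,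
    Submodule.isOrtho_span]
  simp

end InnerProduct

section Counting

variable {α β : Type*} [DecidableEq β] {A : Finset α} {π : α → β}

open scoped Classical in
theorem card_powerset_filter_injOn_image_eq {T : Finset β} :
    (A.powerset.filter fun S : Finset α => Set.InjOn π S ∧ S.image π = T).card =
      ∏ b ∈ T, {a ∈ A | π a = b}.card := by
  rw [← Finset.card_pi]
  symm
  refine Finset.card_bij (fun f _ => T.attach.image fun b => f b.1 b.2) ?_ ?_ ?_
  · intro f hf
    simp only [Finset.mem_pi, Finset.mem_filter] at hf
    have hsection : ∀ b : T, π (f b.1 b.2) = b := fun b => (hf b.1 b.2).2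
    refine Finset.mem_filter.2 ⟨Finset.mem_powerset.2 (Finset.image_subset_iff.2
      fun b _ => (hf b.1 b.2).1), ?_, ?_⟩
    · rintro _ ha _ hb hab
      simp only [Finset.coe_image, Set.mem_image, Finset.mem_coe] at ha hb
      obtain ⟨a, -, rfl⟩ := ha
      obtain ⟨b, -, rfl⟩ := hb
      rw [hsection, hsection] at hab
      rw [Subtype.ext hab]
    · simp [Finset.image_image, Function.comp_def, hsection]
  · intro f hf g hg hfg
    simp only [Finset.mem_pi, Finset.mem_filter] at hf hg
    funext b hb
    obtain ⟨c, -, hc⟩ := Finset.mem_image.1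
      (hfg ▸ Finset.mem_image_of_mem _ (Finset.mem_attach T ⟨b, hb⟩))
    obtain rfl : c.1 = b := by rw [← (hg c.1 c.2).2, hc, (hf b hb).2]
    exact hc.symm
  · intro S hS
    obtain ⟨hSA, hinj, rfl⟩ := by simpa only [Finset.mem_filter, Finset.mem_powerset] using hS
    choose f hfS hf using fun b (hb : b ∈ S.image π) => Finset.mem_image.1 hb
    refine ⟨f, Finset.mem_pi.2 fun b hb => Finset.mem_filter.2 ⟨hSA (hfS b hb), hf b hb⟩, ?_⟩
    refine subset_antisymm (Finset.image_subset_iff.2 fun b _ => hfS b.1 b.2) fun a ha => ?_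
    have hmem := Finset.mem_image_of_mem π ha
    exact Finset.mem_image.2 ⟨⟨π a, hmem⟩, Finset.mem_attach _ _,
      hinj (hfS _ hmem) ha (hf _ hmem)⟩

open scoped Classical in
theorem card_powersetCard_filter_injOn {m : ℕ}
    (hm : ∀ b ∈ A.image π, {a ∈ A | π a = b}.card = m) (r : ℕ) :
    ((A.powersetCard r).filter fun S : Finset α => Set.InjOn π S).card =
      (A.image π).card.choose r * m ^ r := by
  have hmaps : ∀ S ∈ (A.powersetCard r).filter fun S : Finset α => Set.InjOn π S,
      S.image π ∈ (A.image π).powersetCard r := by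
    intro S hS
    simp only [Finset.mem_filter, Finset.mem_powersetCard] at hS ⊢
    exact ⟨Finset.image_subset_image hS.1.1, (Finset.card_image_of_injOn hS.2).trans hS.1.2⟩
  have hfiber : ∀ T ∈ (A.image π).powersetCard r,
      (((A.powersetCard r).filter fun S : Finset α => Set.InjOn π S).filter
        fun S => S.image π = T).card = m ^ r := by
    intro T hT
    obtain ⟨hTA, hTr⟩ := Finset.mem_powersetCard.1 hT
    rw [← hTr, ← Finset.prod_const, ← Finset.prod_congr rfl fun b hb => hm b (hTA hb),
      ← card_powerset_filter_injOn_image_eq]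
    congr 1
    ext S
    simp only [Finset.mem_filter, Finset.mem_powersetCard, Finset.mem_powerset]
    constructor
    · exact fun h => ⟨h.1.1.1, h.1.2, h.2⟩
    · rintro ⟨hSA, hinj, rfl⟩
      exact ⟨⟨⟨hSA, (Finset.card_image_of_injOn hinj).symm⟩, hinj⟩, rfl⟩
  rw [Finset.card_eq_sum_card_fiberwise hmaps, Finset.sum_congr rfl hfiber]
  simp

end Counting

section BoxNormals

variable {ι W : Type*} [NormedAddCommGroup W] [InnerProductSpace ℝ W] {u : ι → W} {A S : Finset ι}
  {i j : ι}

/-- The vectors `u i` with `i ∈ A` are the outward unit normals of the facets of a box in `W`;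
the last condition says that the box is bounded. -/
structure IsBoxNormals (u : ι → W) (A : Finset ι) : Prop where
  norm_eq_one : ∀ i ∈ A, ‖u i‖ = 1
  inner_eq_zero_or_eq_neg : ∀ i ∈ A, ∀ j ∈ A, i ≠ j → inner ℝ (u i) (u j) = 0 ∨ u j = -u i
  eq_zero_of_inner_nonpos : ∀ d, (∀ i ∈ A, inner ℝ (u i) d ≤ 0) → d = 0

namespace IsBoxNormals

theorem inner_self_eq_one (hu : IsBoxNormals u A) (hi : i ∈ A) : inner ℝ (u i) (u i) = 1 := by
  rw [real_inner_self_eq_norm_sq, hu.norm_eq_one i hi, one_pow]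

theorem span_eq_span_iff (hu : IsBoxNormals u A) (hi : i ∈ A) (hj : j ∈ A) :
    (ℝ ∙ u i) = ℝ ∙ u j ↔ inner ℝ (u i) (u j) ≠ 0 := by
  constructor
  · intro hspan hzero
    obtain ⟨c, hc⟩ := Submodule.mem_span_singleton.1
      (hspan.le (Submodule.mem_span_singleton_self _))
    have hone := hu.inner_self_eq_one hi
    nth_rw 2 [← hc] at hone
    rw [inner_smul_right, hzero, mul_zero] at hone
    exact zero_ne_one hone
  · intro hne
    obtain rfl | hij := eq_or_ne i j
    · rfl
    · rw [(hu.inner_eq_zero_or_eq_neg i hi j hj hij).resolve_left hne, ← Set.neg_singleton,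
        Submodule.span_neg]

theorem injOn_span_iff (hu : IsBoxNormals u A) (hS : S ⊆ A) :
    Set.InjOn (fun i => ℝ ∙ u i) S ↔ (S : Set ι).Pairwise fun i j => inner ℝ (u i) (u j) = 0 :=
  ⟨fun h _ hi _ hj hij => of_not_not fun hne =>
      hij (h hi hj ((hu.span_eq_span_iff (hS hi) (hS hj)).2 hne)),
    fun h _ hi _ hj hspan => of_not_not fun hij =>
      (hu.span_eq_span_iff (hS hi) (hS hj)).1 hspan (h hi hj hij)⟩

theorem exists_eq_neg (hu : IsBoxNormals u A) (hi : i ∈ A) : ∃ j ∈ A, i ≠ j ∧ u j = -u i := by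
  by_contra! h
  have hzero := hu.eq_zero_of_inner_nonpos (-u i) fun l hl => by
    rw [inner_neg_right, neg_nonpos, real_inner_comm]
    obtain rfl | hil := eq_or_ne i l
    · exact real_inner_self_nonneg
    · exact ((hu.inner_eq_zero_or_eq_neg i hi l hl hil).resolve_right (h l hl hil)).ge
  simpa [neg_eq_zero.1 hzero] using hu.norm_eq_one i hi

open scoped Classical in
theorem card_filter_span_eq (hu : IsBoxNormals u A) (hi : i ∈ A) :
    {l ∈ A | (ℝ ∙ u l) = ℝ ∙ u i}.card = 2 := by
  obtain ⟨j, hj, hij, hneg⟩ := hu.exists_eq_neg hi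
  have hfiber : {l ∈ A | (ℝ ∙ u l) = ℝ ∙ u i} = {i, j} := by
    ext l
    simp only [Finset.mem_filter, Finset.mem_insert, Finset.mem_singleton]
    constructor
    · rintro ⟨hl, hspan⟩
      by_contra! h
      have hli := (hu.inner_eq_zero_or_eq_neg l hl i hi h.1).resolve_left
        ((hu.span_eq_span_iff hl hi).1 hspan)
      have hjl : u j = u l := by rw [hneg, hli, neg_neg]
      have hone : inner ℝ (u l) (u j) = 1 := by rw [hjl, hu.inner_self_eq_one hl]
      obtain hzero | hneg' := hu.inner_eq_zero_or_eq_neg l hl j hj h.2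
      · exact zero_ne_one (hzero.symm.trans hone)
      · rw [hneg', inner_neg_right, hu.inner_self_eq_one hl] at hone
        norm_num at hone
    · rintro (rfl | rfl)
      · exact ⟨hi, rfl⟩
      · exact ⟨hj, by rw [hneg, ← Set.neg_singleton, Submodule.span_neg]⟩
  rw [hfiber, Finset.card_pair hij]

open scoped Classical in
theorem card_image_span [FiniteDimensional ℝ W] (hu : IsBoxNormals u A) :
    (A.image fun i => ℝ ∙ u i).card = Module.finrank ℝ W := by
  obtain ⟨R, hRA, hinj, himage⟩ := Finset.exists_subset_injOn_image_eq_of_surjOn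
    (f := fun i => ℝ ∙ u i) A (A.image fun i => ℝ ∙ u i) (by
      rw [Finset.coe_image]
      exact Set.surjOn_image _ _)
  have horth := (hu.injOn_span_iff hRA).1 hinj
  have hindep : LinearIndepOn ℝ u (R : Set ι) :=
    Orthonormal.linearIndependent ⟨fun i => hu.norm_eq_one i (hRA i.2), fun i j hij =>
      horth i.2 j.2 (Subtype.coe_injective.ne hij)⟩
  have hbot : (Submodule.span ℝ (u '' R))ᗮ = ⊥ := by
    refine (Submodule.eq_bot_iff _).2 fun d hd => hu.eq_zero_of_inner_nonpos d fun i hi => ?_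
    obtain ⟨r, hr, hspan⟩ := Finset.mem_image.1 (himage.ge (Finset.mem_image_of_mem _ hi))
    obtain ⟨c, hc⟩ := Submodule.mem_span_singleton.1
      (hspan.ge (Submodule.mem_span_singleton_self _))
    rw [← hc, inner_smul_left, mem_orthogonal_span_image_iff.1 hd r hr, mul_zero]
  have hcard := finrank_orthogonal_span_image_add_card hindep
  rwa [hbot, finrank_bot, zero_add, ← Finset.card_image_of_injOn hinj, himage] at hcard

theorem card_powersetCard_filter_pairwise [FiniteDimensional ℝ W]
    [DecidablePred fun S : Finset ι => (S : Set ι).Pairwise fun i j => inner ℝ (u i) (u j) = 0]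
    (hu : IsBoxNormals u A) (r : ℕ) :
    ((A.powersetCard r).filter fun S : Finset ι =>
      (S : Set ι).Pairwise fun i j => inner ℝ (u i) (u j) = 0).card =
        (Module.finrank ℝ W).choose r * 2 ^ r := by
  classical
  rw [← hu.card_image_span, ← card_powersetCard_filter_injOn (m := 2)]
  · exact congrArg _ (Finset.filter_congr fun S hS =>
      (hu.injOn_span_iff (Finset.mem_powersetCard.1 hS).1).symm)
  · simp only [Finset.forall_mem_image]
    exact fun i hi => hu.card_filter_span_eq hi

end IsBoxNormals

end BoxNormals

section Minkowski

open Filter Topology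

variable {n : ℕ} {x y u : Fin (n + 1) → ℝ} {v q : EuclideanSpace ℝ (Fin n)}

/-- The projection `(x₀, x₁, …, xₙ) ↦ (x₁, …, xₙ)` onto the Euclidean part of Minkowski space. -/
def spatial : (Fin (n + 1) → ℝ) →ₗ[ℝ] EuclideanSpace ℝ (Fin n) :=
  (WithLp.linearEquiv 2 ℝ (Fin n → ℝ)).symm.toLinearMap ∘ₗ LinearMap.funLeft ℝ ℝ Fin.succ

@[simp] theorem spatial_apply (x : Fin (n + 1) → ℝ) (i : Fin n) : spatial x i = x i.succ := rfl

theorem eq_of_spatial_eq (h0 : x 0 = y 0) (h : spatial x = spatial y) : x = y :=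
  funext (Fin.cases h0 fun i => congrArg (fun z : EuclideanSpace ℝ (Fin n) => z i) h)

/-- The lift `y ↦ (1, y)` of Euclidean space to the affine hyperplane `x₀ = 1` of Minkowski
space; on the unit ball it is a section of the Klein projection. -/
def homog : EuclideanSpace ℝ (Fin n) →ᵃ[ℝ] (Fin (n + 1) → ℝ) where
  toFun y := Fin.cons 1 y
  linear :=
    { toFun := fun y => Fin.cons 0 y
      map_add' := fun y z => by ext i; refine Fin.cases ?_ (fun j => ?_) i <;> simp
      map_smul' := fun c y => by ext i; refine Fin.cases ?_ (fun j => ?_) i <;> simp }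
  map_vadd' y d := by ext i; refine Fin.cases ?_ (fun j => ?_) i <;> simp

@[simp] theorem homog_apply_zero (y : EuclideanSpace ℝ (Fin n)) : homog y 0 = 1 := rfl

@[simp] theorem spatial_homog (y : EuclideanSpace ℝ (Fin n)) : spatial (homog y) = y := rfl

@[simp] theorem homog_linear_apply_zero (d : EuclideanSpace ℝ (Fin n)) : homog.linear d 0 = 0 := rfl

@[simp] theorem spatial_homog_linear (d : EuclideanSpace ℝ (Fin n)) :
    spatial (homog.linear d) = d := rfl

theorem continuous_homog : Continuous (homog : EuclideanSpace ℝ (Fin n) → Fin (n + 1) → ℝ) :=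
  homog.continuous_of_finiteDimensional

theorem kleinMap_eq_smul (x : Fin (n + 1) → ℝ) : kleinMap x = (x 0)⁻¹ • spatial x := by
  ext i
  simp [kleinMap, div_eq_inv_mul]

theorem kleinMap_homog (y : EuclideanSpace ℝ (Fin n)) : kleinMap (homog y) = y := by
  simp [kleinMap_eq_smul]

theorem kleinMap_smul {c : ℝ} (hc : c ≠ 0) (x : Fin (n + 1) → ℝ) :
    kleinMap (c • x) = kleinMap x := by
  rw [kleinMap_eq_smul, kleinMap_eq_smul, map_smul, smul_smul, Pi.smul_apply, smul_eq_mul, mul_inv,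
    mul_right_comm, inv_mul_cancel₀ hc, one_mul]

theorem continuousAt_kleinMap (hx : x 0 ≠ 0) : ContinuousAt kleinMap x := by
  simp only [funext kleinMap_eq_smul]
  exact ((continuous_apply 0).continuousAt.inv₀ hx).smul
    spatial.continuous_of_finiteDimensional.continuousAt

theorem homog_kleinMap (hx : x 0 ≠ 0) : homog (kleinMap x) = (x 0)⁻¹ • x := by
  refine eq_of_spatial_eq ?_ ?_
  · simp [hx]
  · rw [spatial_homog, kleinMap_eq_smul, map_smul]

theorem mink_eq (x y : Fin (n + 1) → ℝ) :
    mink x y = -(x 0 * y 0) + inner ℝ (spatial x) (spatial y) := by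
  simp [mink, PiLp.inner_apply, mul_comm]

theorem mink_comm (x y : Fin (n + 1) → ℝ) : mink x y = mink y x := by
  simp only [mink, mul_comm]

theorem mink_self (x : Fin (n + 1) → ℝ) : mink x x = ‖spatial x‖ ^ 2 - x 0 ^ 2 := by
  rw [mink_eq, real_inner_self_eq_norm_sq]
  ring

/-- The Minkowski form as a bilinear form. -/
def minkForm : LinearMap.BilinForm ℝ (Fin (n + 1) → ℝ) :=
  LinearMap.mk₂ ℝ mink
    (fun x y z => by simp only [mink_eq, map_add, inner_add_left, Pi.add_apply]; ring)
    (fun c x y => by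
      simp only [mink_eq, map_smul, real_inner_smul_left, Pi.smul_apply, smul_eq_mul]; ring)
    (fun x y z => by simp only [mink_eq, map_add, inner_add_right, Pi.add_apply]; ring)
    (fun c x y => by
      simp only [mink_eq, map_smul, real_inner_smul_right, Pi.smul_apply, smul_eq_mul]; ring)

theorem mink_add_left (x y z : Fin (n + 1) → ℝ) : mink (x + y) z = mink x z + mink y z :=
  LinearMap.map_add₂ minkForm x y z

theorem mink_add_right (x y z : Fin (n + 1) → ℝ) : mink x (y + z) = mink x y + mink x z :=
  map_add (minkForm x) y z

theorem mink_sub_right (x y z : Fin (n + 1) → ℝ) : mink x (y - z) = mink x y - mink x z :=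
  map_sub (minkForm x) y z

theorem mink_neg_right (x y : Fin (n + 1) → ℝ) : mink x (-y) = -mink x y :=
  map_neg (minkForm x) y

theorem mink_zero_right (x : Fin (n + 1) → ℝ) : mink x 0 = 0 :=
  map_zero (minkForm x)

theorem mink_smul_left (c : ℝ) (x y : Fin (n + 1) → ℝ) : mink (c • x) y = c * mink x y :=
  LinearMap.map_smul₂ minkForm c x y

theorem mink_smul_right (c : ℝ) (x y : Fin (n + 1) → ℝ) : mink x (c • y) = c * mink x y :=
  map_smul (minkForm x) c y

theorem mink_sum_right {ι : Type*} (s : Finset ι) (x : Fin (n + 1) → ℝ)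
    (f : ι → Fin (n + 1) → ℝ) : mink x (∑ i ∈ s, f i) = ∑ i ∈ s, mink x (f i) :=
  map_sum (minkForm x) f s

theorem continuous_mink (x : Fin (n + 1) → ℝ) : Continuous (mink x) :=
  (minkForm x).continuous_of_finiteDimensional

theorem mink_homog (x : Fin (n + 1) → ℝ) (y : EuclideanSpace ℝ (Fin n)) :
    mink x (homog y) = -x 0 + inner ℝ (spatial x) y := by
  simp [mink_eq]

theorem mink_homog_linear (x : Fin (n + 1) → ℝ) (d : EuclideanSpace ℝ (Fin n)) :
    mink x (homog.linear d) = inner ℝ (spatial x) d := by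
  rw [mink_eq, spatial_homog_linear, homog_linear_apply_zero, mul_zero, neg_zero, zero_add]

theorem mink_homog_self_of_norm_eq_one (hv : ‖v‖ = 1) : mink (homog v) (homog v) = 0 := by
  simp [mink_self, hv]

theorem mink_homog_midpoint (x : Fin (n + 1) → ℝ) (y z : EuclideanSpace ℝ (Fin n)) :
    mink x (homog (midpoint ℝ y z)) = (mink x (homog y) + mink x (homog z)) / 2 := by
  rw [homog.map_midpoint, midpoint_eq_smul_add, mink_smul_right, mink_add_right, invOf_eq_inv]
  ring

/-- The open future cone of Minkowski space, over which the hyperbolic space is projectivised. -/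
def Timelike (x : Fin (n + 1) → ℝ) : Prop := ‖spatial x‖ < x 0

theorem timelike_homog : Timelike (homog v) ↔ ‖v‖ < 1 := Iff.rfl

theorem isOpen_timelike : IsOpen {x : Fin (n + 1) → ℝ | Timelike x} :=
  isOpen_lt spatial.continuous_of_finiteDimensional.norm (continuous_apply 0)

theorem Timelike.pos (hx : Timelike x) : 0 < x 0 := (norm_nonneg _).trans_lt hx

theorem timelike_iff : Timelike x ↔ mink x x < 0 ∧ 0 < x 0 := by
  rw [mink_self, sub_neg]
  exact ⟨fun hx => ⟨pow_lt_pow_left₀ hx (norm_nonneg _) two_ne_zero, hx.pos⟩,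
    fun ⟨hlt, h0⟩ => lt_of_pow_lt_pow_left₀ 2 h0.le hlt⟩

theorem Timelike.smul (hx : Timelike x) {c : ℝ} (hc : 0 < c) : Timelike (c • x) := by
  rw [Timelike, map_smul, norm_smul, Real.norm_of_nonneg hc.le]
  exact mul_lt_mul_of_pos_left hx hc

theorem Timelike.add (hx : Timelike x) (hy : Timelike y) : Timelike (x + y) := by
  rw [Timelike, map_add]
  exact (norm_add_le _ _).trans_lt (add_lt_add hx hy)

theorem convex_timelike : Convex ℝ {x : Fin (n + 1) → ℝ | Timelike x} :=
  convex_iff_forall_pos.2 fun _ hx _ hy _ _ ha hb _ => (hx.smul ha).add (hy.smul hb)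

theorem Timelike.mink_neg (hx : Timelike x) (hy : ‖spatial y‖ ≤ y 0) (hy0 : 0 < y 0) :
    mink x y < 0 := by
  have hinner : inner ℝ (spatial x) (spatial y) < x 0 * y 0 :=
    calc inner ℝ (spatial x) (spatial y) ≤ ‖spatial x‖ * ‖spatial y‖ := real_inner_le_norm _ _
      _ ≤ ‖spatial x‖ * y 0 := by gcongr
      _ < x 0 * y 0 := mul_lt_mul_of_pos_right hx hy0
  rw [mink_eq]
  linarith

theorem Timelike.mink_homog_neg (hx : Timelike x) (hq : ‖q‖ ≤ 1) : mink x (homog q) < 0 :=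
  hx.mink_neg hq one_pos

theorem Timelike.of_mink_neg (hx : Timelike x) (hy : mink y y < 0) (hxy : mink x y < 0) :
    Timelike y := by
  have hnorm : ‖spatial y‖ < |y 0| := by
    rw [mink_self, sub_neg] at hy
    simpa using sq_lt_sq.1 hy
  refine timelike_iff.2 ⟨hy, not_le.1 fun h0 => ?_⟩
  obtain h0 | h0 := h0.lt_or_eq
  · have hneg : mink x (-y) < 0 :=
      hx.mink_neg (by simpa [abs_of_neg h0] using hnorm.le) (by simpa using h0)
    rw [mink_neg_right] at hneg
    linarith
  · exact (norm_nonneg _).not_gt (by simpa [h0] using hnorm)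

theorem Timelike.sub (hx : Timelike x) (hu : mink u (x - u) = 0) (hux : 0 ≤ mink u x) :
    Timelike (x - u) := by
  have hxx := (timelike_iff.1 hx).1
  have hself : mink (x - u) (x - u) = mink x (x - u) := by
    rw [mink_comm x, ← sub_zero (mink (x - u) x), ← hu, mink_comm u, mink_sub_right]
  have hneg : mink x (x - u) < 0 := by
    rw [mink_sub_right, mink_comm x u]
    linarith
  exact hx.of_mink_neg (hself.trans_lt hneg) hneg

theorem Timelike.mink_self_pos (hx : Timelike x) (hxy : mink x y = 0) (hy : y ≠ 0) :
    0 < mink y y := by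
  rw [mink_self, sub_pos, sq_lt_sq, abs_norm]
  by_contra! hle
  obtain h0 | h0 | h0 := lt_trichotomy (y 0) 0
  · have hneg : mink x (-y) < 0 :=
      hx.mink_neg (by simpa [abs_of_neg h0] using hle) (by simpa using h0)
    rw [mink_neg_right, hxy, neg_zero] at hneg
    exact hneg.false
  · refine hy (eq_of_spatial_eq h0 ?_)
    simpa [h0] using hle
  · exact (hx.mink_neg (by simpa [abs_of_pos h0] using hle) h0).ne hxy

theorem exists_null_path (hv : ‖v‖ = 1) (hx : Timelike x) (hy : mink (homog v) y = 0)
    (hyy : 0 < mink y y) : ∃ c > 0, ∃ s : ℝ → ℝ, Tendsto s (𝓝 0) (𝓝 c) ∧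
      ∀ t, mink (t ^ 2 • x + t • y + s t • homog v) (t ^ 2 • x + t • y + s t • homog v) = 0 := by
  have hxv : mink x (homog v) < 0 := hx.mink_homog_neg hv.le
  have hne := hxv.ne
  have hvv := mink_homog_self_of_norm_eq_one hv
  refine ⟨mink y y / (-2 * mink x (homog v)), div_pos hyy (by linarith),
    fun t => (t ^ 2 * mink x x + 2 * t * mink x y + mink y y) / (-2 * mink x (homog v)), ?_,
    fun t => ?_⟩
  · refine Tendsto.div_const (Continuous.tendsto' (by fun_prop) _ _ (by simp)) _
  · simp only [mink_add_left, mink_add_right, mink_smul_left, mink_smul_right, hvv, hy,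
      mink_comm y (homog v), mink_comm y x, mink_comm (homog v) x]
    field_simp
    ring

/-- The component of the Minkowski vector `x` in the horospherical link of the ideal point `v`. For
`x` orthogonal to the null vector `homog v` it represents the class of `x` modulo `homog v`. -/
def linkNormal (v : EuclideanSpace ℝ (Fin n)) (x : Fin (n + 1) → ℝ) : (ℝ ∙ v)ᗮ :=
  (ℝ ∙ v)ᗮ.orthogonalProjectionOnto (spatial x)

theorem coe_linkNormal (hv : ‖v‖ = 1) (hx : mink x (homog v) = 0) :
    (linkNormal v x : EuclideanSpace ℝ (Fin n)) = spatial x - x 0 • v := by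
  rw [mink_homog, neg_add_eq_zero, real_inner_comm] at hx
  rw [linkNormal, Submodule.coe_orthogonalProjectionOnto_apply,
    Submodule.starProjection_orthogonal_val, Submodule.starProjection_unit_singleton ℝ hv, hx]

theorem inner_linkNormal (hv : ‖v‖ = 1) (hx : mink x (homog v) = 0) (hy : mink y (homog v) = 0) :
    inner ℝ (linkNormal v x) (linkNormal v y) = mink x y := by
  rw [Submodule.coe_inner, coe_linkNormal hv hx, coe_linkNormal hv hy]
  rw [mink_homog, neg_add_eq_zero] at hx hy
  rw [mink_eq, inner_sub_left, inner_sub_right, inner_sub_right, real_inner_smul_right,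
    real_inner_smul_left, real_inner_smul_left, real_inner_smul_right,
    real_inner_comm _ v, ← hx, ← hy, real_inner_self_eq_norm_sq, hv]
  ring

end Minkowski

theorem exists_nonpos_add_mul_eq {a b c : ℝ} (hc : -1 < c) (hc0 : c ≤ 0) (ha : a ≤ 0)
    (hb : b ≤ 0) : ∃ α ≤ 0, ∃ β ≤ 0, α + c * β = a ∧ c * α + β = b := by
  have hdet : 0 < 1 - c ^ 2 := by nlinarith
  refine ⟨(a - c * b) / (1 - c ^ 2), div_nonpos_of_nonpos_of_nonneg ?_ hdet.le,
    (b - c * a) / (1 - c ^ 2), div_nonpos_of_nonpos_of_nonneg ?_ hdet.le, ?_, ?_⟩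
  · linarith [mul_nonneg_of_nonpos_of_nonpos hc0 hb]
  · linarith [mul_nonneg_of_nonpos_of_nonpos hc0 ha]
  all_goals
    field_simp
    ring

namespace HypPolyhedron

open Set Filter Topology

section Walls

variable {n : ℕ} {P : HypPolyhedron n} {x z : Fin (n + 1) → ℝ} {y : EuclideanSpace ℝ (Fin n)}

variable (P) in
/-- The cone over `P` in Minkowski space. -/
def cone : Set (Fin (n + 1) → ℝ) :=
  {x | Timelike x ∧ ∀ i, mink (P.e i) x ≤ 0}

theorem smul_mem_cone (hx : x ∈ P.cone) {c : ℝ} (hc : 0 < c) : c • x ∈ P.cone :=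
  ⟨hx.1.smul hc, fun i => by
    rw [mink_smul_right]
    exact mul_nonpos_of_nonneg_of_nonpos hc.le (hx.2 i)⟩

theorem convex_cone : Convex ℝ P.cone := by
  refine convex_iff_forall_pos.2 fun x hx y hy a b ha hb _ => ?_
  have hax := smul_mem_cone hx ha
  have hby := smul_mem_cone hy hb
  exact ⟨hax.1.add hby.1, fun i => by
    rw [mink_add_right]
    exact add_nonpos (hax.2 i) (hby.2 i)⟩

theorem homog_kleinMap_mem_cone (hx : x ∈ P.cone) : homog (kleinMap x) ∈ P.cone := by
  rw [homog_kleinMap hx.1.pos.ne']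
  exact smul_mem_cone hx (inv_pos.2 hx.1.pos)

theorem carrier_subset_cone : P.carrier ⊆ P.cone := fun _ hx =>
  ⟨timelike_iff.2 ⟨hx.1.1.trans_lt (by norm_num), hx.1.2⟩, hx.2⟩

theorem kleinMap_image_carrier : kleinMap '' P.carrier = homog ⁻¹' P.cone := by
  refine Subset.antisymm ?_ fun y hy => ?_
  · rintro _ ⟨x, hx, rfl⟩
    exact homog_kleinMap_mem_cone (carrier_subset_cone hx)
  · have hneg := (timelike_iff.1 hy.1).1
    set r := √(-mink (homog y) (homog y))
    have hr : 0 < r := Real.sqrt_pos.2 (neg_pos.2 hneg)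
    have hr_sq : r ^ 2 = -mink (homog y) (homog y) := Real.sq_sqrt (neg_pos.2 hneg).le
    refine ⟨r⁻¹ • homog y, ⟨⟨?_, by simpa using hr⟩,
      (smul_mem_cone hy (inv_pos.2 hr)).2⟩, ?_⟩
    · rw [mink_smul_right, mink_smul_left, ← neg_eq_iff_eq_neg.2 hr_sq]
      field_simp
    · rw [kleinMap_smul (inv_ne_zero hr.ne'), kleinMap_homog]

theorem mem_cl_of_homog_mem_cone (hy : homog y ∈ P.cone) : y ∈ P.cl :=
  subset_closure (kleinMap_image_carrier.ge hy)

theorem convex_cl : Convex ℝ P.cl := by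
  rw [cl, kleinMap_image_carrier]
  exact (convex_cone.affine_preimage homog).closure

theorem norm_le_one_of_mem_cl (hy : y ∈ P.cl) : ‖y‖ ≤ 1 := by
  refine closure_minimal (t := {y | ‖y‖ ≤ 1}) ?_ (isClosed_le continuous_norm continuous_const) hy
  rw [kleinMap_image_carrier]
  exact fun y hy => hy.1.le

theorem mink_nonpos_of_mem_cl (hy : y ∈ P.cl) (i : Fin P.m) : mink (P.e i) (homog y) ≤ 0 := by
  refine closure_minimal (t := {y | mink (P.e i) (homog y) ≤ 0}) ?_
    (isClosed_le ((continuous_mink _).comp continuous_homog) continuous_const) hy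
  rw [kleinMap_image_carrier]
  exact fun y hy => hy.2 i

theorem homog_mem_cone_of_mem_cl (hy : y ∈ P.cl) (hy1 : ‖y‖ < 1) : homog y ∈ P.cone :=
  ⟨hy1, mink_nonpos_of_mem_cl hy⟩

theorem spatial_e_ne_zero (i : Fin P.m) : spatial (P.e i) ≠ 0 := by
  intro hzero
  have hunit := P.unit i
  rw [mink_self, hzero, norm_zero] at hunit
  linarith [sq_nonneg (P.e i 0)]

variable (P) in
theorem exists_strict_point :
    ∃ y₀ : EuclideanSpace ℝ (Fin n), ‖y₀‖ < 1 ∧ ∀ i, mink (P.e i) (homog y₀) < 0 := by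
  obtain ⟨y₀, hy₀⟩ := P.nonempty_int
  change y₀ ∈ interior (kleinMap '' P.carrier) at hy₀
  rw [kleinMap_image_carrier] at hy₀
  refine ⟨y₀, (interior_subset hy₀).1, fun i => ?_⟩
  let f : EuclideanSpace ℝ (Fin n) →L[ℝ] ℝ := innerSL ℝ (spatial (P.e i))
  have hf : Function.Surjective f := LinearMap.surjective (f := f.toLinearMap) fun h =>
    spatial_e_ne_zero i (inner_self_eq_zero.1 (LinearMap.congr_fun h (spatial (P.e i))))
  have hsub : homog ⁻¹' P.cone ⊆ f ⁻¹' Iic (P.e i 0) := fun y hy => by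
    have := hy.2 i
    rw [mink_homog] at this
    exact (neg_add_nonpos_iff.1 this : _)
  have hlt := interior_mono hsub hy₀
  rw [f.interior_preimage hf, interior_Iic] at hlt
  rw [mink_homog]
  exact neg_add_neg_iff.2 hlt

variable (P) in
/-- The walls with index in `E` through the point represented by the Minkowski vector `z`. -/
def active (E : Finset (Fin P.m)) (z : Fin (n + 1) → ℝ) : Finset (Fin P.m) :=
  {i ∈ E | mink (P.e i) z = 0}

variable (P) in
/-- The walls with index in `E` suffice to cut `P` out, and none of them is redundant. -/
structure IsIrredundant (E : Finset (Fin P.m)) : Prop where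
  mem_cone : ∀ ⦃x⦄, Timelike x → (∀ i ∈ E, mink (P.e i) x ≤ 0) → x ∈ P.cone
  exists_mem_wall : ∀ i ∈ E, ∃ w ∈ P.cone, mink (P.e i) w = 0 ∧
    ∀ j ∈ E, j ≠ i → mink (P.e j) w < 0

variable {E S : Finset (Fin P.m)} {i j : Fin P.m}

theorem mem_active : i ∈ P.active E z ↔ i ∈ E ∧ mink (P.e i) z = 0 := Finset.mem_filter

theorem active_subset : P.active E z ⊆ E := Finset.filter_subset _ _

variable (P) in
theorem exists_isIrredundant : ∃ E, P.IsIrredundant E := by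
  obtain ⟨y₀, hy₀, hneg⟩ := P.exists_strict_point
  obtain ⟨E, -, hE, hwitness⟩ := exists_irredundant_subset (fun i => minkForm (P.e i))
    convex_timelike Finset.univ (timelike_homog.2 hy₀) fun i _ => hneg i
  have hmem : ∀ ⦃x⦄, Timelike x → (∀ i ∈ E, mink (P.e i) x ≤ 0) → x ∈ P.cone :=
    fun x hx hxE => ⟨hx, fun i => hE x hx hxE i (Finset.mem_univ i)⟩
  refine ⟨E, hmem, fun i hi => ?_⟩
  obtain ⟨w, hw, hi0, hneg⟩ := hwitness i hi
  refine ⟨w, hmem hw fun j hj => ?_, hi0, hneg⟩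
  obtain rfl | hji := eq_or_ne j i
  exacts [hi0.le, (hneg j hj hji).le]

theorem IsIrredundant.mem_cl (hE : P.IsIrredundant E) (hy : ‖y‖ ≤ 1)
    (hyE : ∀ i ∈ E, mink (P.e i) (homog y) ≤ 0) : y ∈ P.cl := by
  obtain ⟨y₀, hy₀, hneg⟩ := P.exists_strict_point
  have hsub : openSegment ℝ y₀ y ⊆ homog ⁻¹' P.cone := by
    intro w hw
    refine hE.mem_cone ?_ fun i hi => ?_
    · have hball := (convex_closedBall (0 : EuclideanSpace ℝ (Fin n)) 1)
        |>.openSegment_interior_self_subset_interior (x := y₀) (y := y)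
      rw [interior_closedBall _ one_ne_zero] at hball
      simpa [timelike_homog] using hball (by simpa using hy₀) (by simpa using hy) hw
    · exact (neg_of_mem_openSegment (g := minkForm (P.e i)) (hneg i) (hyE i hi)
        (image_openSegment ℝ homog y₀ y ▸ mem_image_of_mem homog hw)).le
  rw [cl, kleinMap_image_carrier]
  exact closure_mono hsub (by rw [closure_openSegment]; exact right_mem_segment ℝ _ _)

variable (P) in
/-- The part of `P̄` lying on all the walls with index in `S`. -/
def faceOf (S : Finset (Fin P.m)) : Set (EuclideanSpace ℝ (Fin n)) :=
  {y ∈ P.cl | ∀ i ∈ S, mink (P.e i) (homog y) = 0}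

theorem isExposed_faceOf : IsExposed ℝ P.cl (P.faceOf S) := by
  rintro ⟨z, hz, hzS⟩
  let l : StrongDual ℝ (EuclideanSpace ℝ (Fin n)) := ∑ i ∈ S, innerSL ℝ (spatial (P.e i))
  have hl : ∀ y, l y = ∑ i ∈ S, mink (P.e i) (homog y) + ∑ i ∈ S, P.e i 0 := fun y => by
    rw [← Finset.sum_add_distrib]
    simp [l, mink_homog]
  have hle : ∀ y ∈ P.cl, ∑ i ∈ S, mink (P.e i) (homog y) ≤ 0 := fun y hy =>
    Finset.sum_nonpos fun i _ => mink_nonpos_of_mem_cl hy i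
  refine ⟨l, Set.ext fun y => ⟨fun hy => ⟨hy.1, fun x hx => ?_⟩, fun hy => ⟨hy.1, ?_⟩⟩⟩
  · rw [hl, hl, Finset.sum_eq_zero hy.2]
    linarith [hle x hx]
  · have hmax := hy.2 z hz
    rw [hl, hl, Finset.sum_eq_zero hzS] at hmax
    exact (Finset.sum_eq_zero_iff_of_nonpos fun i _ => mink_nonpos_of_mem_cl hy.1 i).1
      (le_antisymm (hle y hy.1) (by linarith))

variable (P) in
/-- The Minkowski vector `z` represents a point in the relative interior of the part of `P` lying
on all the walls with index in `S`, and this part has the same dimension as the intersection of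
these walls. -/
structure IsInnerPoint (S : Finset (Fin P.m)) (z : Fin (n + 1) → ℝ) : Prop where
  mink_eq_zero : ∀ i ∈ S, mink (P.e i) z = 0
  eventually_mem_cone : ∀ᶠ x in 𝓝 z, (∀ i ∈ S, mink (P.e i) x = 0) → x ∈ P.cone

theorem IsInnerPoint.mem_cone (hz : P.IsInnerPoint S z) : z ∈ P.cone :=
  hz.eventually_mem_cone.self_of_nhds hz.mink_eq_zero

theorem IsIrredundant.isInnerPoint_active (hE : P.IsIrredundant E) (hz : z ∈ P.cone) :
    P.IsInnerPoint (P.active E z) z := by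
  refine ⟨fun i hi => (mem_active.1 hi).2, ?_⟩
  have hneg : ∀ᶠ x in 𝓝 z, ∀ i ∈ E, i ∉ P.active E z → mink (P.e i) x < 0 := by
    rw [Finset.eventually_all]
    refine fun i hi => eventually_imp_distrib_left.2 fun hia => ?_
    exact (continuous_mink (P.e i)).tendsto z |>.eventually_lt_const
      ((hz.2 i).lt_of_ne fun h => hia (mem_active.2 ⟨hi, h⟩))
  filter_upwards [hneg, isOpen_timelike.mem_nhds hz.1] with x hxE hx hxS
  refine hE.mem_cone hx fun i hi => ?_
  by_cases hia : i ∈ P.active E z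
  exacts [(hxS i hia).le, (hxE i hi hia).le]

theorem IsInnerPoint.smul (hz : P.IsInnerPoint S z) {c : ℝ} (hc : 0 < c) :
    P.IsInnerPoint S (c • z) := by
  refine ⟨fun i hi => by rw [mink_smul_right, hz.mink_eq_zero i hi, mul_zero], ?_⟩
  have htendsto : Tendsto (c⁻¹ • ·) (𝓝 (c • z)) (𝓝 z) := by
    simpa only [inv_smul_smul₀ hc.ne'] using (continuous_const_smul c⁻¹).tendsto (c • z)
  filter_upwards [htendsto.eventually hz.eventually_mem_cone] with x hx hxS
  have hmem := hx fun i hi => by rw [mink_smul_right, hxS i hi, mul_zero]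
  simpa only [smul_inv_smul₀ hc.ne'] using smul_mem_cone hmem hc

theorem IsInnerPoint.homog_kleinMap (hz : P.IsInnerPoint S z) :
    P.IsInnerPoint S (homog (kleinMap z)) := by
  rw [_root_.homog_kleinMap hz.mem_cone.1.pos.ne']
  exact hz.smul (inv_pos.2 hz.mem_cone.1.pos)

theorem IsInnerPoint.linearIndepOn_spatial (hz : P.IsInnerPoint S z)
    (hS : LinearIndepOn ℝ P.e (S : Set (Fin P.m))) :
    LinearIndepOn ℝ (fun i => spatial (P.e i)) (S : Set (Fin P.m)) := by
  refine hS.map_injOn spatial (LinearMap.injOn_of_disjoint_ker subset_rfl ?_)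
  refine Submodule.disjoint_def.2 fun u hu hker =>
    eq_of_spatial_eq ?_ (hker.trans (map_zero _).symm)
  have hle : Submodule.span ℝ (P.e '' S) ≤ LinearMap.ker (minkForm.flip z) :=
    Submodule.span_le.2 (image_subset_iff.2 hz.mink_eq_zero)
  have huz : mink u z = 0 := hle hu
  rw [mink_eq, LinearMap.mem_ker.1 hker, inner_zero_left, add_zero, neg_eq_zero] at huz
  exact (mul_eq_zero.1 huz).resolve_right hz.mem_cone.1.pos.ne'

theorem IsInnerPoint.sdim_faceOf_add_card (hz : P.IsInnerPoint S z)
    (hS : LinearIndepOn ℝ P.e (S : Set (Fin P.m))) : sdim (P.faceOf S) + S.card = n := by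
  obtain ⟨hzero, hmem⟩ := hz.homog_kleinMap
  set y := kleinMap z
  have hW : ∀ x, x - y ∈ (Submodule.span ℝ ((fun i => spatial (P.e i)) '' S))ᗮ ↔
      ∀ i ∈ S, mink (P.e i) (homog x) = 0 := fun x => by
    refine mem_orthogonal_span_image_iff.trans (forall₂_congr fun i hi => ?_)
    rw [inner_sub_right, sub_eq_zero, ← hzero i hi, mink_homog, mink_homog, add_right_inj]
  have hspan := vectorSpan_eq_of_eventually_mem (F := P.faceOf S) (fun x hx => (hW x).2 hx.2)
    ((continuous_homog.tendsto y).eventually hmem |>.mono fun x hx hxW =>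
      have hxS := (hW x).1 hxW
      ⟨mem_cl_of_homog_mem_cone (hx hxS), hxS⟩)
  rw [sdim, hspan, finrank_orthogonal_span_image_add_card (hz.linearIndepOn_spatial hS),
    finrank_euclideanSpace_fin]

end Walls

section RightAngled

variable {n : ℕ} {P : HypPolyhedron n} {E S : Finset (Fin P.m)} {i j : Fin P.m}
  {x z : Fin (n + 1) → ℝ}

theorem IsRightAngled.mink_eq_zero (hra : P.IsRightAngled) (hij : i ≠ j)
    (hli : LinearIndepOn ℝ P.e {i, j}) (hz : P.IsInnerPoint {i, j} z) :
    mink (P.e i) (P.e j) = 0 := by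
  have hdim := hz.sdim_faceOf_add_card (by rwa [Finset.coe_pair])
  rw [Finset.card_pair hij] at hdim
  have hmem : kleinMap z ∈ P.faceOf {i, j} :=
    ⟨mem_cl_of_homog_mem_cone (homog_kleinMap_mem_cone hz.mem_cone), hz.homog_kleinMap.mink_eq_zero⟩
  have hwall : ∀ l ∈ ({i, j} : Finset (Fin P.m)),
      P.faceInHyperplane (P.e l) (P.faceOf {i, j}) := fun l hl x hx hxF => by
    have hx0 : x 0 ≠ 0 := hx.1.2.ne'
    have hzero := hxF.2 l hl
    rwa [homog_kleinMap hx0, mink_smul_right, mul_eq_zero, or_iff_right (inv_ne_zero hx0)] at hzero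
  exact hra i j hij ⟨P.faceOf {i, j}, ⟨isExposed_faceOf, ⟨_, hmem⟩, by omega⟩,
    hwall i (by simp), hwall j (by simp)⟩

namespace IsIrredundant

theorem linearIndepOn_pair (hE : P.IsIrredundant E) (hi : i ∈ E) (hj : j ∈ E) (hij : i ≠ j) :
    LinearIndepOn ℝ P.e {i, j} := by
  have hzero : ∀ {i j}, i ∈ E → j ∈ E → i ≠ j → ∀ s t : ℝ, s • P.e i + t • P.e j = 0 → t = 0 := by
    intro i j hi hj hij s t hst
    obtain ⟨w, -, hiw, hneg⟩ := hE.exists_mem_wall i hi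
    have hw := congrArg (mink w) hst
    rw [mink_add_right, mink_smul_right, mink_smul_right, mink_zero_right, mink_comm w, hiw,
      mul_zero, zero_add, mink_comm w] at hw
    exact (mul_eq_zero.1 hw).resolve_right (hneg j hj hij.symm).ne
  exact (LinearIndepOn.pair_iff _ hij).2 fun s t hst =>
    ⟨hzero hj hi hij.symm t s ((add_comm _ _).trans hst), hzero hi hj hij s t hst⟩

theorem exists_facet_walls (hE : P.IsIrredundant E) (hi : i ∈ E) :
    ∃ N ⊆ E.erase i,
      (∀ x, Timelike x → mink (P.e i) x = 0 → (∀ j ∈ N, mink (P.e j) x ≤ 0) → x ∈ P.cone) ∧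
      ∀ j ∈ N, ∃ z, P.IsInnerPoint {i, j} z := by
  obtain ⟨w, hw, hiw, hneg⟩ := hE.exists_mem_wall i hi
  have hwall : Convex ℝ ({x | Timelike x} ∩ {x | minkForm (P.e i) x = 0}) :=
    convex_timelike.inter (convex_hyperplane (minkForm (P.e i)).isLinear 0)
  obtain ⟨N, hNE, hN, hwitness⟩ := exists_irredundant_subset (fun j => minkForm (P.e j)) hwall
    (E.erase i) ⟨hw.1, hiw⟩ fun j hj =>
      hneg j (Finset.mem_of_mem_erase hj) (Finset.ne_of_mem_erase hj)
  have hmem : ∀ x, Timelike x → mink (P.e i) x = 0 → (∀ j ∈ N, mink (P.e j) x ≤ 0) →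
      x ∈ P.cone := fun x hx hxi hxN => hE.mem_cone hx fun l hl => by
    obtain rfl | hli := eq_or_ne l i
    exacts [hxi.le, hN x ⟨hx, hxi⟩ hxN l (Finset.mem_erase.2 ⟨hli, hl⟩)]
  refine ⟨N, hNE, hmem, fun j hj => ?_⟩
  obtain ⟨z, ⟨hz, hzi⟩, hzj, hneg⟩ := hwitness j hj
  refine ⟨z, by simpa using ⟨hzi, hzj⟩, ?_⟩
  have hneg' : ∀ᶠ x in 𝓝 z, ∀ l ∈ N, l ≠ j → mink (P.e l) x < 0 := by
    rw [Finset.eventually_all]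
    exact fun l hl => eventually_imp_distrib_left.2 fun hlj =>
      (continuous_mink (P.e l)).tendsto z |>.eventually_lt_const (hneg l hl hlj)
  filter_upwards [hneg', isOpen_timelike.mem_nhds hz] with x hxN hx hxij
  refine hmem x hx (hxij i (by simp)) fun l hl => ?_
  obtain rfl | hlj := eq_or_ne l j
  exacts [(hxij l (by simp)).le, (hxN l hl hlj).le]

-- The walls bounding the facet on wall `i` are orthogonal to that wall, so projecting onto it
-- leaves their inequalities unchanged.
theorem sub_smul_mem_cone (hE : P.IsIrredundant E) (hra : P.IsRightAngled) (hi : i ∈ E)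
    (hx : x ∈ P.cone) : x - mink (P.e i) x • P.e i ∈ P.cone := by
  obtain ⟨N, hNE, hN, hinner⟩ := hE.exists_facet_walls hi
  have hwall : mink (P.e i) (x - mink (P.e i) x • P.e i) = 0 := by
    rw [mink_sub_right, mink_smul_right, P.unit, mul_one, sub_self]
  refine hN _ (hx.1.sub ?_ ?_) hwall fun j hj => ?_
  · rw [mink_smul_left, hwall, mul_zero]
  · rw [mink_smul_left]
    exact mul_self_nonneg _
  · obtain ⟨hji, hj'⟩ := Finset.mem_erase.1 (hNE hj)
    obtain ⟨z, hz⟩ := hinner j hj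
    have horth := hra.mink_eq_zero hji.symm (hE.linearIndepOn_pair hi hj' hji.symm) hz
    rw [mink_sub_right, mink_smul_right, mink_comm (P.e j) (P.e i), horth, mul_zero, sub_zero]
    exact hx.2 j

theorem mink_nonpos (hE : P.IsIrredundant E) (hra : P.IsRightAngled) (hi : i ∈ E) (hj : j ∈ E)
    (hij : i ≠ j) : mink (P.e i) (P.e j) ≤ 0 := by
  obtain ⟨w, hw, hjw, hneg⟩ := hE.exists_mem_wall j hj
  have hproj := (hE.sub_smul_mem_cone hra hi hw).2 j
  rw [mink_sub_right, mink_smul_right, hjw, zero_sub, neg_nonpos, mink_comm (P.e j)] at hproj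
  exact nonpos_of_mul_nonneg_right hproj (hneg i hi hij)

theorem sub_sum_mem_cone_and_active_eq (hE : P.IsIrredundant E) (hra : P.IsRightAngled)
    (hS : S ⊆ E) {c : Fin P.m → ℝ} (hc : ∀ i ∈ S, c i ≤ 0) (hx : Timelike x)
    (hneg : ∀ i, mink (P.e i) x < 0)
    (hzero : ∀ i ∈ S, mink (P.e i) (x - ∑ j ∈ S, c j • P.e j) = 0) :
    x - ∑ j ∈ S, c j • P.e j ∈ P.cone ∧ P.active E (x - ∑ j ∈ S, c j • P.e j) = S := by
  set u := ∑ j ∈ S, c j • P.e j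
  have hmink : ∀ y, mink y u = ∑ j ∈ S, c j * mink y (P.e j) := fun y => by
    simp only [u, mink_sum_right, mink_smul_right]
  have htimelike : Timelike (x - u) := by
    refine hx.sub ?_ ?_
    · rw [mink_comm, hmink]
      exact Finset.sum_eq_zero fun j hj => by rw [mink_comm, hzero j hj, mul_zero]
    · rw [mink_comm, hmink]
      exact Finset.sum_nonneg fun j hj =>
        mul_nonneg_of_nonpos_of_nonpos (hc j hj) (by rw [mink_comm]; exact (hneg j).le)
  have hother : ∀ l ∈ E, l ∉ S → mink (P.e l) (x - u) < 0 := fun l hl hlS => by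
    have hlu : 0 ≤ mink (P.e l) u := by
      rw [hmink]
      exact Finset.sum_nonneg fun j hj => mul_nonneg_of_nonpos_of_nonpos (hc j hj)
        (hE.mink_nonpos hra hl (hS hj) fun h => hlS (h ▸ hj))
    rw [mink_sub_right]
    linarith [hneg l]
  refine ⟨hE.mem_cone htimelike fun l hl => ?_, Finset.ext fun l => ?_⟩
  · by_cases hlS : l ∈ S
    exacts [(hzero l hlS).le, (hother l hl hlS).le]
  · rw [mem_active]
    exact ⟨fun h => not_imp_comm.1 (hother l h.1) h.2.not_lt, fun h => ⟨hS h, hzero l h⟩⟩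

theorem mink_eq_zero_of_neg_one_lt (hE : P.IsIrredundant E) (hra : P.IsRightAngled) (hi : i ∈ E)
    (hj : j ∈ E) (hij : i ≠ j) (hlt : -1 < mink (P.e i) (P.e j)) : mink (P.e i) (P.e j) = 0 := by
  obtain ⟨y₀, hy₀, hneg⟩ := P.exists_strict_point
  obtain ⟨α, hα, β, hβ, hαβi, hαβj⟩ := exists_nonpos_add_mul_eq hlt (hE.mink_nonpos hra hi hj hij)
    (hneg i).le (hneg j).le
  let c : Fin P.m → ℝ := fun l => if l = i then α else β
  have hsum : ∑ l ∈ {i, j}, c l • P.e l = α • P.e i + β • P.e j := by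
    rw [Finset.sum_pair hij]
    simp [c, hij.symm]
  have hc : ∀ l ∈ ({i, j} : Finset (Fin P.m)), c l ≤ 0 := fun l _ => by
    by_cases hl : l = i <;> simp [c, hl, hα, hβ]
  have hzero : ∀ l ∈ ({i, j} : Finset (Fin P.m)),
      mink (P.e l) (homog y₀ - ∑ l ∈ {i, j}, c l • P.e l) = 0 := by
    simp only [hsum, Finset.mem_insert, Finset.mem_singleton, forall_eq_or_imp, forall_eq,
      mink_sub_right, mink_add_right, mink_smul_right, P.unit, mink_comm (P.e j) (P.e i)]
    constructor <;> linarith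
  obtain ⟨hmem, hactive⟩ := hE.sub_sum_mem_cone_and_active_eq hra
    (Finset.insert_subset hi (Finset.singleton_subset_iff.2 hj)) hc (timelike_homog.2 hy₀) hneg
    hzero
  have hinner := hE.isInnerPoint_active hmem
  rw [hactive] at hinner
  exact hra.mink_eq_zero hij (hE.linearIndepOn_pair hi hj hij) hinner

theorem mink_eq_zero_of_common_point (hE : P.IsIrredundant E) (hra : P.IsRightAngled) (hi : i ∈ E)
    (hj : j ∈ E) (hij : i ≠ j) (hz : Timelike z) (hiz : mink (P.e i) z = 0)
    (hjz : mink (P.e j) z = 0) : mink (P.e i) (P.e j) = 0 := by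
  refine hE.mink_eq_zero_of_neg_one_lt hra hi hj hij ?_
  have hne : P.e i + P.e j ≠ 0 := fun h => one_ne_zero
    ((LinearIndepOn.pair_iff _ hij).1 (hE.linearIndepOn_pair hi hj hij) 1 1 (by simpa using h)).1
  have hpos := hz.mink_self_pos (y := P.e i + P.e j)
    (by rw [mink_add_right, mink_comm z, hiz, mink_comm z, hjz, add_zero]) hne
  simp only [mink_add_left, mink_add_right, P.unit, mink_comm (P.e j) (P.e i)] at hpos
  linarith

end IsIrredundant

variable (P) in
/-- The walls with index in `S` are pairwise orthogonal. -/
def IsOrthogonal (S : Finset (Fin P.m)) : Prop :=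
  (S : Set (Fin P.m)).Pairwise fun i j => mink (P.e i) (P.e j) = 0

theorem IsOrthogonal.mink_sum_smul (hS : P.IsOrthogonal S) (hi : i ∈ S) (c : Fin P.m → ℝ) :
    mink (P.e i) (∑ j ∈ S, c j • P.e j) = c i := by
  rw [mink_sum_right, Finset.sum_eq_single_of_mem i hi fun j hj hji => by
    rw [mink_smul_right, hS hi hj hji.symm, mul_zero], mink_smul_right, P.unit, mul_one]

theorem IsOrthogonal.linearIndepOn (hS : P.IsOrthogonal S) :
    LinearIndepOn ℝ P.e (S : Set (Fin P.m)) :=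
  linearIndepOn_finset_iff.2 fun c hc i hi => by
    rw [← hS.mink_sum_smul hi c, hc, mink_zero_right]

theorem IsOrthogonal.exists_active_eq (hS : P.IsOrthogonal S) (hE : P.IsIrredundant E)
    (hra : P.IsRightAngled) (hSE : S ⊆ E) : ∃ z ∈ P.cone, P.active E z = S := by
  obtain ⟨y₀, hy₀, hneg⟩ := P.exists_strict_point
  refine ⟨_, hE.sub_sum_mem_cone_and_active_eq hra hSE (fun i _ => (hneg i).le)
    (timelike_homog.2 hy₀) hneg fun i hi => ?_⟩
  rw [mink_sub_right, hS.mink_sum_smul hi, sub_self]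

theorem IsIrredundant.isOrthogonal_active (hE : P.IsIrredundant E) (hra : P.IsRightAngled)
    (hz : Timelike z) : P.IsOrthogonal (P.active E z) := fun _ hi _ hj hij =>
  have ⟨hiE, hiz⟩ := mem_active.1 hi
  have ⟨hjE, hjz⟩ := mem_active.1 hj
  hE.mink_eq_zero_of_common_point hra hiE hjE hij hz hiz hjz

theorem IsIrredundant.sdim_faceOf_active_add_card (hE : P.IsIrredundant E) (hra : P.IsRightAngled)
    (hz : z ∈ P.cone) : sdim (P.faceOf (P.active E z)) + (P.active E z).card = n :=
  (hE.isInnerPoint_active hz).sdim_faceOf_add_card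
    (hE.isOrthogonal_active hra hz.1).linearIndepOn

end RightAngled

section Faces

variable {n k : ℕ} {P : HypPolyhedron n} {E S T : Finset (Fin P.m)} {z : Fin (n + 1) → ℝ}
  {f v : EuclideanSpace ℝ (Fin n)} {F : Set (EuclideanSpace ℝ (Fin n))}

theorem kleinMap_mem_faceOf_active (hz : z ∈ P.cone) : kleinMap z ∈ P.faceOf (P.active E z) :=
  ⟨mem_cl_of_homog_mem_cone (homog_kleinMap_mem_cone hz), fun i hi => by
    rw [homog_kleinMap hz.1.pos.ne', mink_smul_right, (mem_active.1 hi).2, mul_zero]⟩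

theorem subset_active_of_faceOf_active_subset (hz : z ∈ P.cone) (hTE : T ⊆ E)
    (hsub : P.faceOf (P.active E z) ⊆ P.faceOf T) : T ⊆ P.active E z := fun i hi => by
  have hzero := (hsub (kleinMap_mem_faceOf_active hz)).2 i hi
  rw [homog_kleinMap hz.1.pos.ne', mink_smul_right, mul_eq_zero,
    or_iff_right (inv_ne_zero hz.1.pos.ne')] at hzero
  exact mem_active.2 ⟨hTE hi, hzero⟩

namespace IsIrredundant

theorem faceOf_active_subset (hE : P.IsIrredundant E) (hF : IsExposed ℝ P.cl F) (hfF : f ∈ F)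
    (hf : ‖f‖ < 1) : P.faceOf (P.active E (homog f)) ⊆ F := by
  intro y hy
  have hfcl := hF.subset hfF
  obtain ⟨hzero, hmem⟩ := hE.isInnerPoint_active (homog_mem_cone_of_mem_cl hfcl hf)
  have htendsto : Tendsto (fun t : ℝ => homog (AffineMap.lineMap f y t)) (𝓝[<] 0)
      (𝓝 (homog f)) := by
    have hcont := continuous_homog.comp (AffineMap.lineMap_continuous (R := ℝ) (p := f) (q := y))
    simpa [Function.comp_def] using (hcont.tendsto 0).mono_left nhdsWithin_le_nhds
  obtain ⟨t, ht, ht0 : t < 0⟩ :=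
    ((htendsto.eventually hmem).and self_mem_nhdsWithin).exists
  have hbeyond : AffineMap.lineMap f y t ∈ P.cl := mem_cl_of_homog_mem_cone <| ht fun i hi => by
    rw [AffineMap.apply_lineMap, AffineMap.lineMap_apply_module, mink_add_right, mink_smul_right,
      mink_smul_right, hzero i hi, hy.2 i hi, mul_zero, mul_zero, add_zero]
  have ht1 : 0 < 1 - t := by linarith
  have hsegment : f ∈ openSegment ℝ y (AffineMap.lineMap f y t) := by
    refine ⟨-t / (1 - t), 1 / (1 - t), by apply div_pos <;> linarith, by positivity, ?_, ?_⟩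
    · field_simp
      ring
    · rw [AffineMap.lineMap_apply_module]
      match_scalars <;> field_simp
      ring
  exact hF.isExtreme.2 hy.1 hbeyond hfF hsegment

theorem exists_eq_faceOf_active (hE : P.IsIrredundant E) (hF : IsExposed ℝ P.cl F)
    (hnt : F.Nontrivial) : ∃ z ∈ P.cone, P.faceOf (P.active E z) = F := by
  have hconvex : Convex ℝ F := hF.convex convex_cl
  obtain ⟨f, hf, hfE⟩ := exists_mem_forall_neg_or_forall_eq_zero hnt.nonempty (s := E)
    (g := fun i y => mink (P.e i) (homog y))
    (fun i _ => ((minkForm (P.e i)).convexOn convex_univ).comp_affineMap homog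
      |>.subset (subset_univ F) hconvex)
    fun i _ y hy => mink_nonpos_of_mem_cl (hF.subset hy) i
  obtain ⟨p, hp, q, hq, hpq⟩ := hnt
  have hnorm : ∀ y ∈ F, ‖y‖ ≤ 1 := fun y hy => norm_le_one_of_mem_cl (hF.subset hy)
  -- `f` avoids every wall not containing `F`; moving it halfway to `c` puts it inside the ball.
  set c := midpoint ℝ p q
  have hcF : c ∈ F := hconvex.midpoint_mem hp hq
  have hc : ‖c‖ < 1 := by
    simpa [c, midpoint_eq_smul_add] using norm_combo_lt_of_ne (hnorm p hp) (hnorm q hq) hpq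
      (a := 1 / 2) (b := 1 / 2) (by norm_num) (by norm_num) (by norm_num)
  have hmF : midpoint ℝ f c ∈ F := hconvex.midpoint_mem hf hcF
  have hm : ‖midpoint ℝ f c‖ < 1 := by
    rw [midpoint_eq_smul_add, norm_smul]
    have := norm_add_le f c
    norm_num
    linarith [hnorm f hf]
  refine ⟨_, homog_mem_cone_of_mem_cl (hF.subset hmF) hm,
    (hE.faceOf_active_subset hF hmF hm).antisymm fun y hy => ⟨hF.subset hy, fun i hi => ?_⟩⟩
  obtain ⟨hiE, hi0⟩ := mem_active.1 hi
  refine (hfE i hiE).resolve_left (fun hneg => ?_) y hy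
  rw [mink_homog_midpoint] at hi0
  have := mink_nonpos_of_mem_cl (hF.subset hcF) i
  linarith

theorem mem_faces_iff (hE : P.IsIrredundant E) (hra : P.IsRightAngled) (hk : 1 ≤ k) :
    F ∈ P.faces k ↔ ∃ S ⊆ E, P.IsOrthogonal S ∧ k + S.card = n ∧ P.faceOf S = F := by
  constructor
  · rintro ⟨hF, -, hdim⟩
    have hnt : F.Nontrivial := by
      by_contra h
      rw [sdim, vectorSpan_of_subsingleton ℝ (not_nontrivial_iff.1 h), finrank_bot] at hdim
      omega
    obtain ⟨z, hz, rfl⟩ := hE.exists_eq_faceOf_active hF hnt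
    exact ⟨_, active_subset, hE.isOrthogonal_active hra hz.1,
      hdim ▸ hE.sdim_faceOf_active_add_card hra hz, rfl⟩
  · rintro ⟨S, hSE, hS, hcard, rfl⟩
    obtain ⟨z, hz, rfl⟩ := hS.exists_active_eq hE hra hSE
    have hdim := hE.sdim_faceOf_active_add_card hra hz
    exact ⟨isExposed_faceOf, ⟨_, kleinMap_mem_faceOf_active hz⟩, by omega⟩

theorem injOn_faceOf (hE : P.IsIrredundant E) (hra : P.IsRightAngled) :
    InjOn P.faceOf {S | S ⊆ E ∧ P.IsOrthogonal S} := by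
  rintro S ⟨hSE, hS⟩ T ⟨hTE, hT⟩ heq
  obtain ⟨z, hz, rfl⟩ := hS.exists_active_eq hE hra hSE
  obtain ⟨w, hw, rfl⟩ := hT.exists_active_eq hE hra hTE
  exact (subset_active_of_faceOf_active_subset hw hSE heq.ge).antisymm
    (subset_active_of_faceOf_active_subset hz hTE heq.le)

open scoped Classical in
theorem ncard_faces_through (hE : P.IsIrredundant E) (hra : P.IsRightAngled) (hk : 1 ≤ k)
    (hkn : k ≤ n) (hv : v ∈ P.cl) :
    {F ∈ P.faces k | v ∈ F}.ncard =
      (((P.active E (homog v)).powersetCard (n - k)).filter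
        fun S : Finset (Fin P.m) => P.IsOrthogonal S).card := by
  have himage : {F ∈ P.faces k | v ∈ F} = P.faceOf ''
      (((P.active E (homog v)).powersetCard (n - k)).filter
        fun S : Finset (Fin P.m) => P.IsOrthogonal S) := by
    ext F
    simp only [mem_ofPred_eq, hE.mem_faces_iff hra hk, Finset.coe_filter, mem_image,
      Finset.mem_powersetCard]
    constructor
    · rintro ⟨⟨S, hSE, hS, hcard, rfl⟩, -, hvS⟩
      exact ⟨S, ⟨⟨fun i hi => mem_active.2 ⟨hSE hi, hvS i hi⟩, by omega⟩, hS⟩, rfl⟩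
    · rintro ⟨S, ⟨⟨hSv, hcard⟩, hS⟩, rfl⟩
      exact ⟨⟨S, hSv.trans active_subset, hS, by omega, rfl⟩, hv,
        fun i hi => (mem_active.1 (hSv hi)).2⟩
  rw [himage, InjOn.ncard_image, ncard_coe_finset]
  refine (hE.injOn_faceOf hra).mono fun S hS => ?_
  obtain ⟨hSv, hS⟩ := Finset.mem_filter.1 hS
  exact ⟨(Finset.mem_powersetCard.1 hSv).1.trans active_subset, hS⟩

theorem card_active_of_mem_finiteVerts (hE : P.IsIrredundant E) (hra : P.IsRightAngled)
    (hv : v ∈ P.finiteVerts) : (P.active E (homog v)).card = n := by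
  have hdim := hE.sdim_faceOf_active_add_card hra
    (homog_mem_cone_of_mem_cl (hv.1.subset rfl) hv.2)
  have hsub := hE.faceOf_active_subset hv.1 rfl hv.2
  rwa [sdim, vectorSpan_of_subsingleton ℝ (subsingleton_singleton.anti hsub), finrank_bot,
    zero_add] at hdim

end IsIrredundant

theorem ncard_faces_through_of_mem_finiteVerts (hra : P.IsRightAngled) (hk : 1 ≤ k) (hkn : k ≤ n)
    (hv : v ∈ P.finiteVerts) : {F ∈ P.faces k | v ∈ F}.ncard = n.choose k := by
  classical
  obtain ⟨E, hE⟩ := P.exists_isIrredundant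
  rw [hE.ncard_faces_through hra hk hkn (hv.1.subset rfl), Finset.filter_true_of_mem,
    Finset.card_powersetCard, hE.card_active_of_mem_finiteVerts hra hv, Nat.choose_symm hkn]
  exact fun S hS => (hE.isOrthogonal_active hra (timelike_homog.2 hv.2)).mono
    (Finset.coe_subset.2 (Finset.mem_powersetCard.1 hS).1)

end Faces

section IdealVertices

variable {n k : ℕ} {P : HypPolyhedron n} {E : Finset (Fin P.m)} {y : Fin (n + 1) → ℝ}
  {v : EuclideanSpace ℝ (Fin n)} {i j : Fin P.m}

theorem mem_idealVerts (hv : v ∈ P.cl) (hv1 : ‖v‖ = 1) : v ∈ P.idealVerts :=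
  ⟨isExposed_singleton_of_norm_eq_one (fun _ => norm_le_one_of_mem_cl) hv hv1, hv1⟩

theorem IsIrredundant.kleinMap_mem_idealVerts (hE : P.IsIrredundant E) (hy0 : 0 < y 0)
    (hyy : mink y y = 0) (hyE : ∀ i ∈ E, mink (P.e i) y ≤ 0) : kleinMap y ∈ P.idealVerts := by
  have hnorm : ‖kleinMap y‖ = 1 := by
    rw [mink_self, sub_eq_zero, sq_eq_sq₀ (norm_nonneg _) hy0.le] at hyy
    rw [kleinMap_eq_smul, norm_smul, hyy, norm_inv, Real.norm_of_nonneg hy0.le,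
      inv_mul_cancel₀ hy0.ne']
  refine mem_idealVerts (hE.mem_cl hnorm.le fun i hi => ?_) hnorm
  rw [homog_kleinMap hy0.ne', mink_smul_right]
  exact mul_nonpos_of_nonneg_of_nonpos (inv_nonneg.2 hy0.le) (hyE i hi)

theorem eventually_mink_nonpos {p : ℝ → Fin (n + 1) → ℝ} (hv : v ∈ P.cl) {c : ℝ} (hc : 0 < c)
    (hp : Tendsto p (𝓝[>] 0) (𝓝 (c • homog v)))
    (hpE : ∀ i ∈ P.active E (homog v), ∀ t > 0, mink (P.e i) (p t) ≤ 0) :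
    ∀ᶠ t in 𝓝[>] 0, ∀ i ∈ E, mink (P.e i) (p t) ≤ 0 := by
  refine (Finset.eventually_all E).2 fun i hi => ?_
  obtain hzero | hlt := (mink_nonpos_of_mem_cl hv i).eq_or_lt
  · filter_upwards [self_mem_nhdsWithin] with t ht
    exact hpE i (mem_active.2 ⟨hi, hzero⟩) t ht
  · refine (((continuous_mink (P.e i)).tendsto _ |>.comp hp).eventually_lt_const ?_).mono
      fun _ h => h.le
    rw [mink_smul_right]
    exact mul_neg_of_pos_of_neg hc hlt

theorem IsIrredundant.accPt_idealVerts (hE : P.IsIrredundant E) (hv : v ∈ P.idealVerts)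
    (hy : mink (homog v) y = 0) (hyy : 0 < mink y y)
    (hyE : ∀ i ∈ P.active E (homog v), mink (P.e i) y ≤ 0) : AccPt v (𝓟 P.idealVerts) := by
  obtain ⟨y₀, hy₀, hneg⟩ := P.exists_strict_point
  have hvv := mink_homog_self_of_norm_eq_one hv.2
  have hvx : mink (homog v) (homog y₀) < 0 :=
    mink_comm (homog v) _ ▸ Timelike.mink_homog_neg (timelike_homog.2 hy₀) hv.2.le
  -- The null vectors `p t` represent ideal vertices that accumulate at `v` as `t → 0⁺`.
  obtain ⟨c, hc, s, hs, hnull⟩ := exists_null_path hv.2 (timelike_homog.2 hy₀) hy hyy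
  set p : ℝ → Fin (n + 1) → ℝ := fun t => t ^ 2 • homog y₀ + t • y + s t • homog v
  have hp : Tendsto p (𝓝[>] 0) (𝓝 (c • homog v)) := by
    have hpoly : Tendsto (fun t : ℝ => t ^ 2 • homog y₀ + t • y) (𝓝 0) (𝓝 0) :=
      Continuous.tendsto' (by fun_prop) _ _ (by simp)
    simpa using (hpoly.add (hs.smul_const (homog v))).mono_left nhdsWithin_le_nhds
  have hp_pos : ∀ᶠ t in 𝓝[>] 0, 0 < p t 0 :=
    ((continuous_apply 0).tendsto _ |>.comp hp).eventually_const_lt (by simpa using hc)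
  have hpE := eventually_mink_nonpos (E := E) (hv.1.subset rfl) hc hp fun i hi t ht => by
    simp only [p, mink_add_right, mink_smul_right, (mem_active.1 hi).2, mul_zero, add_zero]
    exact add_nonpos (mul_nonpos_of_nonneg_of_nonpos (sq_nonneg t) (hneg i).le)
      (mul_nonpos_of_nonneg_of_nonpos (le_of_lt ht) (hyE i hi))
  have hklein : Tendsto (fun t => kleinMap (p t)) (𝓝[>] 0) (𝓝 v) := by
    have hcont := (continuousAt_kleinMap (x := c • homog v) (by simpa using hc.ne')).tendsto
    rw [kleinMap_smul hc.ne', kleinMap_homog] at hcont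
    exact hcont.comp hp
  refine accPt_iff_frequently.2 (hklein.frequently (Eventually.frequently ?_))
  filter_upwards [hp_pos, hpE, self_mem_nhdsWithin] with t ht_pos htE (ht : 0 < t)
  refine ⟨fun heq => ?_, hE.kleinMap_mem_idealVerts ht_pos (hnull t) htE⟩
  have hpv : mink (homog v) (homog (kleinMap (p t))) < 0 := by
    rw [homog_kleinMap ht_pos.ne']
    simp only [p, mink_add_right, mink_smul_right, hy, hvv, mul_zero, add_zero]
    exact mul_neg_of_pos_of_neg (inv_pos.2 ht_pos) (mul_neg_of_pos_of_neg (pow_pos ht 2) hvx)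
  exact hpv.ne (heq ▸ hvv)

theorem inner_linkNormal_of_mem_active (hv : v ∈ P.idealVerts) (hi : i ∈ P.active E (homog v))
    (hj : j ∈ P.active E (homog v)) :
    inner ℝ (linkNormal v (P.e i)) (linkNormal v (P.e j)) = mink (P.e i) (P.e j) :=
  inner_linkNormal hv.2 (mem_active.1 hi).2 (mem_active.1 hj).2

theorem norm_linkNormal_of_mem_active (hv : v ∈ P.idealVerts) (hi : i ∈ P.active E (homog v)) :
    ‖linkNormal v (P.e i)‖ = 1 := by
  rw [← pow_eq_one_iff_of_nonneg (norm_nonneg _) two_ne_zero, ← real_inner_self_eq_norm_sq,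
    inner_linkNormal_of_mem_active hv hi hi, P.unit]

theorem IsIrredundant.isBoxNormals_linkNormal (hE : P.IsIrredundant E) (hra : P.IsRightAngled)
    (hv : v ∈ P.idealVerts) (hacc : ¬ AccPt v (𝓟 P.idealVerts)) :
    IsBoxNormals (fun i => linkNormal v (P.e i)) (P.active E (homog v)) := by
  refine ⟨fun i hi => norm_linkNormal_of_mem_active hv hi, fun i hi j hj hij => ?_, fun d hd => ?_⟩
  · rw [or_iff_not_imp_left, inner_linkNormal_of_mem_active hv hi hj]
    intro hne
    have hui := norm_linkNormal_of_mem_active hv hi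
    have huj := norm_linkNormal_of_mem_active hv hj
    have hle : mink (P.e i) (P.e j) ≤ -1 := not_lt.1 fun hlt =>
      hne (hE.mink_eq_zero_of_neg_one_lt hra (mem_active.1 hi).1 (mem_active.1 hj).1 hij hlt)
    have hge := neg_one_le_real_inner_of_norm_eq_one hui huj
    rw [← inner_linkNormal_of_mem_active hv hi hj] at hle
    rw [(inner_eq_neg_one_iff_of_norm_eq_one hui huj).1 (hle.antisymm hge), neg_neg]
  · by_contra hd0
    refine hacc (hE.accPt_idealVerts hv (y := homog.linear d) ?_ ?_ fun i hi => ?_)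
    · rw [mink_homog_linear, spatial_homog]
      exact Submodule.mem_orthogonal_singleton_iff_inner_right.1 d.2
    · rw [mink_homog_linear, spatial_homog_linear]
      exact real_inner_self_pos.2 (by simpa using hd0)
    · rw [mink_homog_linear]
      simpa [linkNormal] using hd i hi

theorem ncard_faces_through_of_mem_idealVerts (hra : P.IsRightAngled) (hk : 1 ≤ k) (hkn : k ≤ n)
    (hv : v ∈ P.idealVerts) (hacc : ¬ AccPt v (𝓟 P.idealVerts)) :
    {F ∈ P.faces k | v ∈ F}.ncard = (n - 1).choose (k - 1) * 2 ^ (n - k) := by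
  classical
  obtain ⟨E, hE⟩ := P.exists_isIrredundant
  have hdim : Module.finrank ℝ (ℝ ∙ v)ᗮ = n - 1 := by
    have hv0 : v ≠ 0 := norm_ne_zero_iff.1 (hv.2.trans_ne one_ne_zero)
    have hsum := (ℝ ∙ v).finrank_add_finrank_orthogonal
    rw [finrank_span_singleton hv0, finrank_euclideanSpace_fin] at hsum
    omega
  have hcard := (hE.isBoxNormals_linkNormal hra hv hacc).card_powersetCard_filter_pairwise (n - k)
  rw [hE.ncard_faces_through hra hk hkn (hv.1.subset rfl),
    ← Nat.choose_symm (Nat.sub_le_sub_right hkn 1), Nat.sub_sub_sub_cancel_right hk, ← hdim,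
    ← hcard]
  refine congrArg _ (Finset.filter_congr fun S hS => ?_)
  have hSv := (Finset.mem_powersetCard.1 hS).1
  exact forall₄_congr fun i hi j hj => by
    beta_reduce
    rw [inner_linkNormal_of_mem_active hv (hSv hi) (hSv hj)]

end IdealVertices

end HypPolyhedron

theorem faces_through_vertices_general {n k : ℕ} (hk : 1 ≤ k) (hkn : k ≤ n) {P : HypPolyhedron n}
    (hra : P.IsRightAngled) :
    (∀ v ∈ P.finiteVerts, {F ∈ P.faces k | v ∈ F}.ncard = n.choose k) ∧
      ∀ v ∈ P.idealVerts, ¬ AccPt v (Filter.principal P.idealVerts) →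
        {F ∈ P.faces k | v ∈ F}.ncard = (n - 1).choose (k - 1) * 2 ^ (n - k) :=
  ⟨fun _ hv => HypPolyhedron.ncard_faces_through_of_mem_finiteVerts hra hk hkn hv,
    fun _ hv hacc => HypPolyhedron.ncard_faces_through_of_mem_idealVerts hra hk hkn hv hacc⟩

/-- In a finite-volume right-angled convex hyperbolic `n`-polyhedron, for `1 ≤ k ≤ n - 1`,
every finite vertex is contained in exactly `C(n, k)` `k`-faces and every ideal vertex is
contained in exactly `C(n-1, k-1) ⬝ 2^{n-k}` `k`-faces; in particular every ideal vertex is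
contained in exactly `2(n-1)` facets. -/
theorem faces_through_vertices (n k : ℕ) (hn : 2 ≤ n) (hk : 1 ≤ k) (hk' : k ≤ n - 1)
    (P : HypPolyhedron n) (hfv : P.FiniteVolume) (hra : P.IsRightAngled) :
    (∀ v ∈ P.finiteVerts, {F ∈ P.faces k | v ∈ F}.ncard = Nat.choose n k) ∧
      (∀ v ∈ P.idealVerts,
        {F ∈ P.faces k | v ∈ F}.ncard = Nat.choose (n - 1) (k - 1) * 2 ^ (n - k)) ∧
      (∀ v ∈ P.idealVerts, {F ∈ P.faces (n - 1) | v ∈ F}.ncard = 2 * (n - 1)) := by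
  have hacc (v) : ¬ AccPt v (Filter.principal P.idealVerts) := fun h =>
    Set.Infinite.of_accPt h (hfv.1.subset (Set.sep_subset _ _))
  obtain ⟨hfinite, hideal⟩ := faces_through_vertices_general hk (by omega) hra
  refine ⟨hfinite, fun v hv => hideal v hv (hacc v), fun v hv => ?_⟩
  rw [(faces_through_vertices_general (by omega) (by omega) hra).2 v hv (hacc v)]
  obtain ⟨m, rfl⟩ := Nat.exists_eq_add_of_le' hn
  simp [Nat.choose_succ_self_right, mul_comm]
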